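/- Let G be a graph on n vertices with adjacency matrix A and stability number α(G), and let k > 0 be a noninteger real scalar. Then the quartic form p_{A,k}(x) := (x²)^T (kA + kI - J) (x²) has a local minimizer over ℝ^n if and only if α(G) < k. -/

import Mathlib

open Matrix
open scoped RealInnerProductSpace

/-- The stability (independence) number of a graph: the size of the largest set of
pairwise non-adjacent vertices. -/
noncomputable def stabilityNumber {V : Type*} (G : SimpleGraph V) : ℕ :=
  sSup {k | ∃ s : Finset V, s.card = k ∧ ∀ i ∈ s, ∀ j ∈ s, i ≠ j → ¬ G.Adj i j}

/-- The matrix `M_{A,k} = k A + k I - J`, where `J` is the all-ones matrix. -/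
noncomputable def MAk {n : ℕ} (A : Matrix (Fin n) (Fin n) ℝ) (k : ℝ) : Matrix (Fin n) (Fin n) ℝ :=
  k • A + k • (1 : Matrix (Fin n) (Fin n) ℝ) - Matrix.of (fun _ _ => (1 : ℝ))

/-- Entrywise square of a vector. -/
def vsq {n : ℕ} (x : Fin n → ℝ) : Fin n → ℝ := fun i => (x i) ^ 2

/-- A symmetric matrix `M` is copositive if `xᵀ M x ≥ 0` for all entrywise nonnegative `x`. -/
def Copositive {n : ℕ} (M : Matrix (Fin n) (Fin n) ℝ) : Prop :=
  ∀ x : Fin n → ℝ, (∀ i, 0 ≤ x i) → 0 ≤ x ⬝ᵥ M.mulVec x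

/-- The quartic form `p_M(x) = (x²)ᵀ M (x²)`. -/
noncomputable def quarticForm {n : ℕ} (M : Matrix (Fin n) (Fin n) ℝ) :
    EuclideanSpace ℝ (Fin n) → ℝ :=
  fun x => vsq x ⬝ᵥ M.mulVec (vsq x)

/-- The quadratic form `q_M(x) = xᵀ M x`. -/
noncomputable def quadForm {n : ℕ} (M : Matrix (Fin n) (Fin n) ℝ) :
    EuclideanSpace ℝ (Fin n) → ℝ :=
  fun x => x ⬝ᵥ M.mulVec x

/-- `xm` is a local minimizer of `f` over `Ω`: `xm ∈ Ω` and there is `ε > 0` such that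
`f xm ≤ f x` for all `x ∈ Ω` with `‖x - xm‖ ≤ ε` (Euclidean norm). -/
def IsLocalMinimizer {n : ℕ} (f : EuclideanSpace ℝ (Fin n) → ℝ)
    (Ω : Set (EuclideanSpace ℝ (Fin n))) (xm : EuclideanSpace ℝ (Fin n)) : Prop :=
  xm ∈ Ω ∧ ∃ ε > 0, ∀ x ∈ Ω, ‖x - xm‖ ≤ ε → f xm ≤ f x

/-- `xm` is a strict local minimizer of `f` over `Ω`: `xm ∈ Ω` and there is `ε > 0` such that
`f xm < f x` for all `x ∈ Ω` with `x ≠ xm` and `‖x - xm‖ ≤ ε` (Euclidean norm). -/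
def IsStrictLocalMinimizer {n : ℕ} (f : EuclideanSpace ℝ (Fin n) → ℝ)
    (Ω : Set (EuclideanSpace ℝ (Fin n))) (xm : EuclideanSpace ℝ (Fin n)) : Prop :=
  xm ∈ Ω ∧ ∃ ε > 0, ∀ x ∈ Ω, x ≠ xm → ‖x - xm‖ ≤ ε → f xm < f x

/-!
If `α(G) ≤ k`, the Motzkin–Straus inequality `(∑ yᵢ)² ≤ α(G) yᵀ(A + I)y` for `y ≥ 0` makes
`M = k(A + I) - J` copositive, so the origin is a minimizer. Conversely, by homogeneity, the origin
is a local minimizer only if `M` is copositive, and testing `M` on the indicator vector of a maximum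
stable set gives `α(G) ≤ k`.

A local minimizer `x ≠ 0` forces `k` to be the size of a stable set. Put `y = x²`. Since `y` may be
moved along any direction `z` supported on `supp x`, such `z` satisfy `zᵀMy = 0` and `zᵀMz ≥ 0`.
The first condition says that the closed neighbourhood of each vertex of `supp x` carries the
fraction `1/k` of the mass of `y`. The second, at `z = eᵤ - eᵥ + e_w`, excludes induced paths
`u, v, w` in `supp x`, which is therefore a disjoint union of cliques. Each clique carries the
fraction `1/k` of the mass, so there are `k` of them, and one vertex from each forms a stable set.
-/

lemma stabilityNumber_eq_indepNum {V : Type*} (G : SimpleGraph V) :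
    stabilityNumber G = G.indepNum := by
  simp only [stabilityNumber, SimpleGraph.indepNum, SimpleGraph.isNIndepSet_iff,
    Set.Pairwise, Finset.mem_coe, and_comm]

section ClosedNeighborhood

open Finset

variable {V : Type*} [DecidableEq V] (G : SimpleGraph V) [G.LocallyFinite]

/-- The closed neighbourhood `N[v]` of a vertex: `v` together with its neighbours. In terms of it,
row `v` of `A + I` is the indicator function of `N[v]`. -/
def closedNeighborFinset (v : V) : Finset V := insert v (G.neighborFinset v)

variable {G}

lemma mem_closedNeighborFinset {v w : V} :
    w ∈ closedNeighborFinset G v ↔ w = v ∨ G.Adj v w := by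
  simp [closedNeighborFinset]

lemma self_mem_closedNeighborFinset (v : V) : v ∈ closedNeighborFinset G v :=
  mem_insert_self v _

lemma mem_closedNeighborFinset_comm {v w : V} :
    w ∈ closedNeighborFinset G v ↔ v ∈ closedNeighborFinset G w := by
  simp only [mem_closedNeighborFinset, eq_comm, G.adj_comm]

lemma isIndepSet_insert_of_disjoint_closedNeighborFinset {v : V} {s : Finset V}
    (hs : G.IsIndepSet (s : Set V)) (hv : Disjoint s (closedNeighborFinset G v)) :
    G.IsIndepSet ((insert v s : Finset V) : Set V) := by
  have hadj : ∀ w ∈ s, v ≠ w → Gᶜ.Adj v w := fun w hw hvw =>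
    (SimpleGraph.compl_adj ..).2 ⟨hvw, fun h =>
      disjoint_left.1 hv hw (mem_closedNeighborFinset.2 (Or.inr h))⟩
  rw [← SimpleGraph.isClique_compl] at hs ⊢
  rw [coe_insert]
  exact SimpleGraph.isClique_insert.2 ⟨hs, hadj⟩

-- Greedy choice: repeatedly take a remaining vertex minimizing `d` and discard its closed
-- neighbourhood.
lemma exists_isIndepSet_dominating {α : Type*} [LinearOrder α] (d : V → α) (T : Finset V) :
    ∃ S ⊆ T, G.IsIndepSet (S : Set V) ∧
      ∀ w ∈ T, ∃ v ∈ S, w ∈ closedNeighborFinset G v ∧ d v ≤ d w := by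
  induction T using Finset.strongInduction with
  | H T ih =>
    obtain rfl | hT := T.eq_empty_or_nonempty
    · exact ⟨∅, by simp⟩
    obtain ⟨v, hvT, hmin⟩ := exists_min_image T d hT
    obtain ⟨S, hST, hS, hdom⟩ := ih (T \ closedNeighborFinset G v)
      (ssubset_iff_of_subset sdiff_subset |>.2
        ⟨v, hvT, by simp [self_mem_closedNeighborFinset]⟩)
    refine ⟨insert v S, insert_subset hvT (hST.trans sdiff_subset),
      isIndepSet_insert_of_disjoint_closedNeighborFinset hS
        (disjoint_of_subset_left hST sdiff_disjoint), fun w hw => ?_⟩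
    by_cases hwv : w ∈ closedNeighborFinset G v
    · exact ⟨v, mem_insert_self v S, hwv, hmin w hw⟩
    · obtain ⟨u, hu, hwu⟩ := hdom w (mem_sdiff.2 ⟨hw, hwv⟩)
      exact ⟨u, mem_insert_of_mem hu, hwu⟩

lemma exists_isIndepSet_partition_closedNeighborFinset (T : Finset V)
    (htrans : ∀ u ∈ T, ∀ v ∈ T, ∀ w ∈ T, G.Adj u v → G.Adj v w → u ≠ w → G.Adj u w) :
    ∃ S ⊆ T, G.IsIndepSet (S : Set V) ∧
      (S : Set V).PairwiseDisjoint (fun v => T ∩ closedNeighborFinset G v) ∧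
      S.biUnion (fun v => T ∩ closedNeighborFinset G v) = T := by
  obtain ⟨S, hST, hS, hdom⟩ := exists_isIndepSet_dominating (G := G) (fun _ => (0 : ℕ)) T
  refine ⟨S, hST, hS, fun u hu v hv huv => disjoint_left.2 fun w hwu hwv => ?_, ?_⟩
  · obtain ⟨hw, hwu⟩ := mem_inter.1 hwu
    refine hS hu hv huv ?_
    rcases mem_closedNeighborFinset.1 hwu with rfl | huw <;>
      rcases mem_closedNeighborFinset.1 (mem_inter.1 hwv).2 with rfl | hvw
    · exact absurd rfl huv
    · exact hvw.symm
    · exact huw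
    · exact htrans u (hST hu) w hw v (hST hv) huw hvw.symm huv
  · refine subset_antisymm (biUnion_subset.2 fun v _ => inter_subset_left) fun w hw => ?_
    obtain ⟨v, hv, hwv, -⟩ := hdom w hw
    exact mem_biUnion.2 ⟨v, hv, mem_inter.2 ⟨hw, hwv⟩⟩

end ClosedNeighborhood

section WeightedGraph

open Finset

variable {V : Type*} [Fintype V] [DecidableEq V] {G : SimpleGraph V} [DecidableRel G.Adj]

lemma exists_isIndepSet_card_eq_of_mul_sum_closedNeighborFinset {R : Type*} [Semiring R]
    [IsRightCancelMulZero R] {k : R} {y : V → R}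
    (hy : ∑ v, y v ≠ 0)
    (hbal : ∀ v, y v ≠ 0 → k * ∑ w ∈ closedNeighborFinset G v, y w = ∑ w, y w)
    (htrans : ∀ u v w, y u ≠ 0 → y v ≠ 0 → y w ≠ 0 →
      G.Adj u v → G.Adj v w → u ≠ w → G.Adj u w) :
    ∃ S : Finset V, G.IsIndepSet (S : Set V) ∧ (#S : R) = k := by
  classical
  set T : Finset V := {v | y v ≠ 0} with hT
  have hmem (v : V) : v ∈ T ↔ y v ≠ 0 := by simp [hT]
  obtain ⟨S, hST, hS, hdisj, hunion⟩ := exists_isIndepSet_partition_closedNeighborFinset T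
    fun u hu v hv w hw => htrans u v w ((hmem u).1 hu) ((hmem v).1 hv) ((hmem w).1 hw)
  have hrestrict (s : Finset V) : ∑ v ∈ T ∩ s, y v = ∑ v ∈ s, y v :=
    sum_subset inter_subset_right fun v hv hvT => by
      simpa [hv, hmem] using hvT
  refine ⟨S, hS, mul_right_cancel₀ hy ?_⟩
  calc (#S : R) * ∑ w, y w = ∑ v ∈ S, k * ∑ w ∈ closedNeighborFinset G v, y w := by
        rw [sum_congr rfl fun v hv => hbal v ((hmem v).1 (hST hv)), sum_const, nsmul_eq_mul]
    _ = k * ∑ v ∈ S, ∑ w ∈ T ∩ closedNeighborFinset G v, y w := by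
        simp only [hrestrict, mul_sum]
    _ = k * ∑ w, y w := by
        rw [← sum_biUnion hdisj, hunion, ← hrestrict univ, inter_univ]

variable {𝕜 : Type*} [Field 𝕜] [LinearOrder 𝕜] [IsStrictOrderedRing 𝕜]

-- Weighted Caro–Wei inequality; unit weights give `∑ 1 / (deg v + 1) ≤ α(G)`.
lemma sum_div_sum_closedNeighborFinset_le_indepNum {y : V → 𝕜} (hy : ∀ v, 0 ≤ y v) :
    ∑ v, y v / ∑ w ∈ closedNeighborFinset G v, y w ≤ G.indepNum := by
  set d : V → 𝕜 := fun v => ∑ w ∈ closedNeighborFinset G v, y w with hd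
  have hd0 (v : V) : 0 ≤ d v := sum_nonneg fun w _ => hy w
  obtain ⟨S, -, hS, hdom⟩ := exists_isIndepSet_dominating (G := G) d univ
  choose! σ hσS hσ hdσ using hdom
  have hterm (v : V) : y v / d v ≤ y v / d (σ v) := by
    obtain h0 | hpos := (hy v).eq_or_lt
    · simp [← h0]
    · have hle : y v ≤ d (σ v) := single_le_sum (fun w _ => hy w) (hσ v (mem_univ v))
      exact div_le_div_of_nonneg_left (hy v) (hpos.trans_le hle) (hdσ v (mem_univ v))
  calc ∑ v, y v / d v ≤ ∑ v, y v / d (σ v) := sum_le_sum fun v _ => hterm v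
    _ = ∑ u ∈ S, ∑ v with σ v = u, y v / d (σ v) := (sum_fiberwise_of_maps_to hσS _).symm
    _ ≤ ∑ u ∈ S, ∑ v ∈ closedNeighborFinset G u, y v / d u := by
        refine sum_le_sum fun u _ => ?_
        rw [sum_congr rfl fun v hv => by rw [(mem_filter.1 hv).2]]
        refine sum_le_sum_of_subset_of_nonneg (fun v hv => ?_)
          fun v _ _ => div_nonneg (hy v) (hd0 u)
        exact (mem_filter.1 hv).2 ▸ hσ v (mem_univ v)
    _ = ∑ u ∈ S, d u / d u := by simp only [hd, sum_div]
    _ ≤ ∑ u ∈ S, 1 := sum_le_sum fun u _ => div_self_le_one (d u)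
    _ ≤ G.indepNum := by simpa using hS.card_le_indepNum

-- Motzkin–Straus inequality, from Caro–Wei by Cauchy–Schwarz.
lemma sq_sum_le_indepNum_mul_sum {y : V → 𝕜} (hy : ∀ v, 0 ≤ y v) :
    (∑ v, y v) ^ 2 ≤ G.indepNum * ∑ v, y v * ∑ w ∈ closedNeighborFinset G v, y w := by
  set d : V → 𝕜 := fun v => ∑ w ∈ closedNeighborFinset G v, y w
  have hd (v : V) : y v ≤ d v := single_le_sum (fun w _ => hy w) (self_mem_closedNeighborFinset v)
  have hd0 (v : V) : 0 ≤ d v := (hy v).trans (hd v)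
  have hsplit (v : V) : y v ^ 2 = y v / d v * (y v * d v) := by
    obtain h0 | hpos := (hy v).eq_or_lt
    · simp [← h0]
    · have := (hpos.trans_le (hd v)).ne'
      field_simp
  calc (∑ v, y v) ^ 2 ≤ (∑ v, y v / d v) * ∑ v, y v * d v :=
        sum_sq_le_sum_mul_sum_of_sq_le_mul univ (fun v _ => div_nonneg (hy v) (hd0 v))
          (fun v _ => mul_nonneg (hy v) (hd0 v)) fun v _ => (hsplit v).le
    _ ≤ G.indepNum * ∑ v, y v * d v :=
        mul_le_mul_of_nonneg_right (sum_div_sum_closedNeighborFinset_le_indepNum hy)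
          (sum_nonneg fun v _ => mul_nonneg (hy v) (hd0 v))

end WeightedGraph

section MAk

variable {n : ℕ} (G : SimpleGraph (Fin n)) [DecidableRel G.Adj] (k : ℝ)

lemma MAk_adjMatrix_apply (i j : Fin n) :
    MAk (G.adjMatrix ℝ) k i j = (if j ∈ closedNeighborFinset G i then k else 0) - 1 := by
  by_cases hij : j = i
  · simp [MAk, hij, self_mem_closedNeighborFinset]
  · simp [MAk, mem_closedNeighborFinset, hij, Ne.symm hij]

lemma isSymm_MAk_adjMatrix : (MAk (G.adjMatrix ℝ) k).IsSymm :=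
  Matrix.IsSymm.ext fun i j => by
    simp only [MAk_adjMatrix_apply, mem_closedNeighborFinset_comm]

lemma MAk_adjMatrix_mulVec_apply (y : Fin n → ℝ) (i : Fin n) :
    (MAk (G.adjMatrix ℝ) k *ᵥ y) i = k * ∑ j ∈ closedNeighborFinset G i, y j - ∑ j, y j := by
  simp [Matrix.mulVec, dotProduct, MAk_adjMatrix_apply, sub_mul, Finset.sum_sub_distrib,
    Finset.mul_sum]

lemma dotProduct_MAk_adjMatrix_mulVec (y : Fin n → ℝ) :
    y ⬝ᵥ MAk (G.adjMatrix ℝ) k *ᵥ y =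
      k * ∑ i, y i * ∑ j ∈ closedNeighborFinset G i, y j - (∑ i, y i) ^ 2 := by
  simp only [dotProduct, MAk_adjMatrix_mulVec_apply, mul_sub, Finset.sum_sub_distrib,
    ← Finset.sum_mul, mul_left_comm _ k, ← Finset.mul_sum, sq]

variable {G k}

lemma dotProduct_MAk_adjMatrix_mulVec_of_isIndepSet {S : Finset (Fin n)}
    (hS : G.IsIndepSet (S : Set (Fin n))) :
    (fun i => if i ∈ S then 1 else 0) ⬝ᵥ
      MAk (G.adjMatrix ℝ) k *ᵥ (fun i => if i ∈ S then 1 else 0) = S.card * (k - S.card) := by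
  have hinter (i : Fin n) (hi : i ∈ S) : closedNeighborFinset G i ∩ S = {i} := by
    refine Finset.eq_singleton_iff_unique_mem.2
      ⟨Finset.mem_inter.2 ⟨self_mem_closedNeighborFinset i, hi⟩, fun j hj => ?_⟩
    obtain ⟨hji, hjS⟩ := Finset.mem_inter.1 hj
    exact (mem_closedNeighborFinset.1 hji).resolve_right fun hij => hS hi hjS hij.ne hij
  rw [dotProduct_MAk_adjMatrix_mulVec]
  simp only [ite_mul, one_mul, zero_mul, Finset.sum_ite_mem, Finset.univ_inter]
  rw [Finset.sum_congr rfl fun i hi => by rw [hinter i hi, Finset.sum_singleton],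
    Finset.sum_const, nsmul_one]
  ring

lemma copositive_MAk_adjMatrix_iff (hk : 0 ≤ k) :
    Copositive (MAk (G.adjMatrix ℝ) k) ↔ (G.indepNum : ℝ) ≤ k := by
  refine ⟨fun hM => ?_, fun hα y hy => ?_⟩
  · obtain ⟨S, hS, hcard⟩ := G.exists_isNIndepSet_indepNum
    have hform := hM (fun i => if i ∈ S then 1 else 0) fun i => by positivity
    rw [dotProduct_MAk_adjMatrix_mulVec_of_isIndepSet hS, hcard] at hform
    obtain h0 | hpos := G.indepNum.eq_zero_or_pos
    · simpa [h0] using hk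
    · exact sub_nonneg.1 (nonneg_of_mul_nonneg_right hform (Nat.cast_pos.2 hpos))
  · have hquad : 0 ≤ ∑ i, y i * ∑ j ∈ closedNeighborFinset G i, y j :=
      Finset.sum_nonneg fun i _ => mul_nonneg (hy i) (Finset.sum_nonneg fun j _ => hy j)
    rw [dotProduct_MAk_adjMatrix_mulVec, sub_nonneg]
    exact (sq_sum_le_indepNum_mul_sum hy).trans (mul_le_mul_of_nonneg_right hα hquad)

end MAk

section LocalMin

open Filter Topology

variable {n : ℕ}

lemma isLocalMinimizer_univ_iff_isLocalMin {f : EuclideanSpace ℝ (Fin n) → ℝ}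
    {x : EuclideanSpace ℝ (Fin n)} : IsLocalMinimizer f Set.univ x ↔ IsLocalMin f x := by
  simp [IsLocalMinimizer, IsLocalMin, IsMinFilter, Metric.nhds_basis_closedBall.eventually_iff,
    dist_eq_norm]

lemma copositive_iff_forall_quarticForm_nonneg {M : Matrix (Fin n) (Fin n) ℝ} :
    Copositive M ↔ ∀ x, 0 ≤ quarticForm M x := by
  refine ⟨fun hM x => hM _ fun i => sq_nonneg (x i), fun h y hy => ?_⟩
  have hsqrt : vsq (WithLp.toLp 2 fun i => √(y i)) = y := funext fun i => Real.sq_sqrt (hy i)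
  simpa only [quarticForm, hsqrt] using h (WithLp.toLp 2 fun i => √(y i))

lemma quarticForm_smul (M : Matrix (Fin n) (Fin n) ℝ) (t : ℝ) (x : EuclideanSpace ℝ (Fin n)) :
    quarticForm M (t • x) = t ^ 4 * quarticForm M x := by
  have hvsq : vsq (t • x) = t ^ 2 • vsq x := by
    ext i
    simp [vsq, mul_pow]
  simp only [quarticForm, hvsq, Matrix.mulVec_smul, dotProduct_smul, smul_dotProduct, smul_eq_mul]
  ring

lemma isLocalMin_quarticForm_zero_iff {M : Matrix (Fin n) (Fin n) ℝ} :
    IsLocalMin (quarticForm M) 0 ↔ Copositive M := by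
  have h0 : quarticForm M 0 = 0 := by simpa using quarticForm_smul M 0 0
  rw [copositive_iff_forall_quarticForm_nonneg]
  refine ⟨fun hmin x => ?_, fun h => Eventually.of_forall fun x => h0.trans_le (h x)⟩
  have htend : Tendsto (fun t : ℝ => t • x) (𝓝[>] 0) (𝓝 0) :=
    (Continuous.tendsto' (by fun_prop) 0 0 (zero_smul ℝ x)).mono_left nhdsWithin_le_nhds
  obtain ⟨t, ht, htpos⟩ := ((htend.eventually hmin).and self_mem_nhdsWithin).exists
  rw [h0, quarticForm_smul] at ht
  exact nonneg_of_mul_nonneg_right ht (pow_pos htpos 4)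

lemma dotProduct_mulVec_add_smul {ι R : Type*} [Fintype ι] [CommRing R] {M : Matrix ι ι R}
    (hM : M.IsSymm) (y z : ι → R) (t : R) :
    (y + t • z) ⬝ᵥ M *ᵥ (y + t • z) =
      y ⬝ᵥ M *ᵥ y + 2 * t * (z ⬝ᵥ M *ᵥ y) + t ^ 2 * (z ⬝ᵥ M *ᵥ z) := by
  have hswap : y ⬝ᵥ M *ᵥ z = z ⬝ᵥ M *ᵥ y := by
    rw [← dotProduct_transpose_mulVec, hM.eq]
  simp only [Matrix.mulVec_add, Matrix.mulVec_smul, add_dotProduct, dotProduct_add,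
    smul_dotProduct, dotProduct_smul, smul_eq_mul, hswap]
  ring

lemma eq_zero_and_nonneg_of_isLocalMin_quadratic {a b c : ℝ}
    (h : IsLocalMin (fun t : ℝ => c + 2 * t * a + t ^ 2 * b) 0) : a = 0 ∧ 0 ≤ b := by
  have hderiv : HasDerivAt (fun t : ℝ => c + 2 * t * a + t ^ 2 * b) (2 * a) 0 := by
    simpa using ((((hasDerivAt_id' (0 : ℝ)).const_mul 2).mul_const a).const_add c).fun_add
      ((hasDerivAt_pow 2 (0 : ℝ)).mul_const b)
  obtain rfl : a = 0 := by simpa using h.hasDerivAt_eq_zero hderiv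
  obtain ⟨t, ht, ht0⟩ := ((h.filter_mono nhdsWithin_le_nhds).and self_mem_nhdsWithin :
    ∀ᶠ t in 𝓝[≠] (0 : ℝ), _).exists
  refine ⟨rfl, ?_⟩
  have htb : 0 ≤ t ^ 2 * b := by simpa using ht
  exact nonneg_of_mul_nonneg_right htb (sq_pos_of_ne_zero ht0)

-- The curve is `√(x² + t z)` coordinatewise, with the signs of `x`; where `x i = 0` the junk value
-- `z i / 0 = 0` is harmless because the factor `x i` vanishes.
lemma exists_continuous_vsq_eq_add_smul (x : EuclideanSpace ℝ (Fin n)) {z : Fin n → ℝ}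
    (hz : ∀ i, x i = 0 → z i = 0) :
    ∃ c : ℝ → EuclideanSpace ℝ (Fin n),
      Continuous c ∧ c 0 = x ∧ ∀ᶠ t in 𝓝 0, vsq (c t) = vsq x + t • z := by
  refine ⟨fun t => WithLp.toLp 2 fun i => x i * √(1 + t * (z i / x i ^ 2)), ?_, ?_, ?_⟩
  · exact (PiLp.continuous_toLp 2 _).comp (by fun_prop)
  · ext i
    simp
  have hpos : ∀ᶠ t in 𝓝 (0 : ℝ), ∀ i, 0 < 1 + t * (z i / x i ^ 2) :=
    eventually_all.2 fun i =>
      (Continuous.tendsto' (by fun_prop) 0 1 (by simp)).eventually_const_lt one_pos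
  filter_upwards [hpos] with t ht
  ext i
  by_cases hi : x i = 0
  · simp [vsq, hi, hz i hi]
  · simp only [vsq, mul_pow, Real.sq_sqrt (ht i).le, Pi.add_apply, Pi.smul_apply, smul_eq_mul]
    field_simp

lemma dotProduct_mulVec_of_isLocalMin_quarticForm {M : Matrix (Fin n) (Fin n) ℝ} (hM : M.IsSymm)
    {x : EuclideanSpace ℝ (Fin n)} (hx : IsLocalMin (quarticForm M) x) {z : Fin n → ℝ}
    (hz : ∀ i, x i = 0 → z i = 0) :
    z ⬝ᵥ M *ᵥ vsq x = 0 ∧ 0 ≤ z ⬝ᵥ M *ᵥ z := by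
  obtain ⟨c, hc, hc0, hvsq⟩ := exists_continuous_vsq_eq_add_smul x hz
  have hmin : IsLocalMin (quarticForm M ∘ c) 0 :=
    IsLocalMin.comp_continuous (hc0.symm ▸ hx) hc.continuousAt
  refine eq_zero_and_nonneg_of_isLocalMin_quadratic (c := vsq x ⬝ᵥ M *ᵥ vsq x)
    ((EventuallyEq.isLocalMin_iff ?_).1 hmin)
  filter_upwards [hvsq] with t ht
  simp only [Function.comp_apply, quarticForm, ht, dotProduct_mulVec_add_smul hM]

end LocalMin

section NonzeroMin

variable {n : ℕ} {G : SimpleGraph (Fin n)} [DecidableRel G.Adj] {k : ℝ}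
  {x : EuclideanSpace ℝ (Fin n)}

lemma mul_sum_closedNeighborFinset_of_isLocalMin
    (hx : IsLocalMin (quarticForm (MAk (G.adjMatrix ℝ) k)) x) {i : Fin n} (hi : x i ≠ 0) :
    k * ∑ j ∈ closedNeighborFinset G i, vsq x j = ∑ j, vsq x j := by
  have hfirst := (dotProduct_mulVec_of_isLocalMin_quarticForm (isSymm_MAk_adjMatrix G k) hx
    (z := Pi.single i 1) fun j hj => Pi.single_eq_of_ne (by rintro rfl; exact hi hj) 1).1
  rw [single_one_dotProduct, MAk_adjMatrix_mulVec_apply] at hfirst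
  exact sub_eq_zero.1 hfirst

lemma adj_trans_of_isLocalMin
    (hx : IsLocalMin (quarticForm (MAk (G.adjMatrix ℝ) k)) x) {u v w : Fin n}
    (hu : x u ≠ 0) (hv : x v ≠ 0) (hw : x w ≠ 0) (huv : G.Adj u v) (hvw : G.Adj v w)
    (huw : u ≠ w) : G.Adj u w := by
  by_contra hnadj
  have hnadj' : ¬ G.Adj w u := fun h => hnadj h.symm
  set M := MAk (G.adjMatrix ℝ) k with hM
  have hsecond (a b c : ℝ) : 0 ≤ (Pi.single u a + Pi.single v b + Pi.single w c) ⬝ᵥ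
      M *ᵥ (Pi.single u a + Pi.single v b + Pi.single w c) := by
    refine (dotProduct_mulVec_of_isLocalMin_quarticForm (isSymm_MAk_adjMatrix G k) hx
      fun i hi => ?_).2
    have hne {j : Fin n} (hj : x j ≠ 0) : i ≠ j := by rintro rfl; exact hj hi
    simp [hne hu, hne hv, hne hw]
  have hcenter : 0 ≤ k - 1 := by
    simpa [hM, MAk_adjMatrix_apply, self_mem_closedNeighborFinset] using hsecond 0 1 0
  have hpath : 0 ≤ -k - 1 :=
    calc 0 ≤ _ := hsecond 1 (-1) 1
      _ = -k - 1 := by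
        simp [hM, Matrix.mulVec_add, MAk_adjMatrix_apply, mem_closedNeighborFinset, huv, huv.symm,
          hvw, hvw.symm, hnadj, hnadj', huw, huw.symm]
        ring
  linarith

lemma exists_isIndepSet_card_eq_of_isLocalMin
    (hx : IsLocalMin (quarticForm (MAk (G.adjMatrix ℝ) k)) x) (hx0 : x ≠ 0) :
    ∃ S : Finset (Fin n), G.IsIndepSet (S : Set (Fin n)) ∧ (S.card : ℝ) = k := by
  have hsupp (i : Fin n) : vsq x i ≠ 0 ↔ x i ≠ 0 := pow_ne_zero_iff two_ne_zero
  have hsum : ∑ i, vsq x i ≠ 0 := by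
    simpa [vsq, EuclideanSpace.real_norm_sq_eq] using pow_ne_zero 2 (norm_ne_zero_iff.2 hx0)
  refine exists_isIndepSet_card_eq_of_mul_sum_closedNeighborFinset hsum
    (fun i hi => mul_sum_closedNeighborFinset_of_isLocalMin hx ((hsupp i).1 hi)) ?_
  simp only [hsupp]
  exact fun u v w => adj_trans_of_isLocalMin hx

end NonzeroMin

theorem pAk_has_localMinimizer_iff_general {n : ℕ} (G : SimpleGraph (Fin n)) [DecidableRel G.Adj]
    (k : ℝ) (hk : 0 < k) (hk' : ∀ m : ℕ, m ≤ stabilityNumber G → (m : ℝ) ≠ k) :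
    (∃ xm, IsLocalMinimizer (quarticForm (MAk (G.adjMatrix ℝ) k)) Set.univ xm) ↔
      (stabilityNumber G : ℝ) < k := by
  simp only [isLocalMinimizer_univ_iff_isLocalMin]
  rw [stabilityNumber_eq_indepNum] at hk' ⊢
  constructor
  · rintro ⟨x, hx⟩
    obtain rfl : x = 0 := by
      by_contra hx0
      obtain ⟨S, hS, hcard⟩ := exists_isIndepSet_card_eq_of_isLocalMin hx hx0
      exact hk' S.card hS.card_le_indepNum hcard
    have hα := (copositive_MAk_adjMatrix_iff hk.le).1 (isLocalMin_quarticForm_zero_iff.1 hx)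
    exact lt_of_le_of_ne hα (hk' _ le_rfl)
  · intro hα
    exact ⟨0, isLocalMin_quarticForm_zero_iff.2 ((copositive_MAk_adjMatrix_iff hk.le).2 hα.le)⟩

/-- For `k > 0` noninteger, the quartic form `p_{A,k}` has a local minimizer over `ℝⁿ`
iff `α(G) < k`. -/
theorem pAk_has_localMinimizer_iff {n : ℕ} (G : SimpleGraph (Fin n)) [DecidableRel G.Adj]
    (k : ℝ) (hk : 0 < k) (hk' : ∀ m : ℤ, (m : ℝ) ≠ k) :
    (∃ xm, IsLocalMinimizer (quarticForm (MAk (G.adjMatrix ℝ) k)) Set.univ xm) ↔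
      (stabilityNumber G : ℝ) < k :=
  pAk_has_localMinimizer_iff_general G k hk fun m _ => mod_cast hk' m
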